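/- Let Φ ∈ ℝ^{m×n} have restricted isometry constant δ := δ_{2K} ∈ (0,1) of order 2K, set τ := δ^{1/2}, let x ∈ ℝ^n be K-sparse with support T, |T| = K ≥ 1, set κ := max_{i,j∈T} |x_i|/|x_j|, and let y = Φx + v with v ≠ 0 and SNR ≥ κ²·δ^{−3/2}. Then for every run of K iterations of OMP applied to (Φ, y), the final residual satisfies ‖r^K‖₂² ≤ 11·⌈τK⌉·(max_{i∈T}|x_i|)² + (1 + 1/τ)·‖v‖₂². -/

import Mathlib

noncomputable section
open Finset

/-- `Vec n` is `ℝ^n` with the Euclidean (ℓ²) norm. -/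
abbrev Vec (n : ℕ) := EuclideanSpace ℝ (Fin n)

/-- The standard inner product `⟨u, v⟩ = ∑ i, u i * v i`. -/
def dot {n : ℕ} (u v : Vec n) : ℝ := ∑ i, u i * v i

/-- The `j`-th column of a matrix, as a Euclidean vector. -/
def col {m n : ℕ} (Φ : Matrix (Fin m) (Fin n) ℝ) (j : Fin n) : Vec m :=
  WithLp.toLp 2 fun i => Φ i j

/-- Matrix-vector multiplication `Φ x`, valued in Euclidean space. -/
def mulVec' {m n : ℕ} (Φ : Matrix (Fin m) (Fin n) ℝ) (x : Vec n) : Vec m :=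
  WithLp.toLp 2 fun i => ∑ j, Φ i j * x j

/-- The support of a vector, as a `Finset`. -/
def suppF {n : ℕ} (x : Vec n) : Finset (Fin n) :=
  Finset.univ.filter fun i => x i ≠ 0

/-- Restriction of a vector to an index set (zero outside the set). -/
def restrict {n : ℕ} (x : Vec n) (S : Finset (Fin n)) : Vec n :=
  WithLp.toLp 2 fun i => if i ∈ S then x i else 0

/-- `RIPConst Φ L δ` : δ is the restricted isometry constant of `Φ` of order `L`,
i.e. the smallest `c ≥ 0` such that `(1-c)‖u‖² ≤ ‖Φu‖² ≤ (1+c)‖u‖²` for all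
`L`-sparse `u`. -/
def RIPConst {m n : ℕ} (Φ : Matrix (Fin m) (Fin n) ℝ) (L : ℕ) (δ : ℝ) : Prop :=
  IsLeast {c : ℝ | 0 ≤ c ∧ ∀ u : Vec n, (suppF u).card ≤ L →
    (1 - c) * ‖u‖ ^ 2 ≤ ‖mulVec' Φ u‖ ^ 2 ∧ ‖mulVec' Φ u‖ ^ 2 ≤ (1 + c) * ‖u‖ ^ 2} δ

/-- Signal-to-noise ratio `‖Φx‖²/‖v‖²`. -/
def SNR {m n : ℕ} (Φ : Matrix (Fin m) (Fin n) ℝ) (x : Vec n) (v : Vec m) : ℝ :=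
  ‖mulVec' Φ x‖ ^ 2 / ‖v‖ ^ 2

/-- A run of `N` iterations of Orthogonal Matching Pursuit on data `(Φ, y)`:
`idx (k+1) = t^{k+1}` is the index selected at iteration `k+1`, `sets k = T^k`,
`est k = x^k` and `res k = r^k`. -/
structure OMPRun {m n : ℕ} (Φ : Matrix (Fin m) (Fin n) ℝ) (y : Vec m) (N : ℕ) where
  idx : ℕ → Fin n
  sets : ℕ → Finset (Fin n)
  est : ℕ → Vec n
  res : ℕ → Vec m
  sets_zero : sets 0 = ∅
  est_zero : est 0 = 0
  res_zero : res 0 = y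
  idx_not_mem : ∀ k < N, idx (k + 1) ∉ sets k
  idx_max : ∀ k < N, ∀ i : Fin n, i ∉ sets k →
    |dot (col Φ i) (res k)| ≤ |dot (col Φ (idx (k + 1))) (res k)|
  sets_succ : ∀ k < N, sets (k + 1) = insert (idx (k + 1)) (sets k)
  est_supp : ∀ k < N, suppF (est (k + 1)) ⊆ sets (k + 1)
  est_min : ∀ k < N, ∀ u : Vec n, suppF u ⊆ sets (k + 1) →
    ‖y - mulVec' Φ (est (k + 1))‖ ≤ ‖y - mulVec' Φ u‖
  res_succ : ∀ k < N, res (k + 1) = y - mulVec' Φ (est (k + 1))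

/-- The vector `Φᵀ w` restricted to an index set `A` (the vector of correlations
`⟨φ_i, w⟩` for `i ∈ A`, zero outside `A`), as a Euclidean vector. -/
def colDots {m n : ℕ} (Φ : Matrix (Fin m) (Fin n) ℝ) (A : Finset (Fin n)) (w : Vec m) : Vec n :=
  WithLp.toLp 2 fun i => if i ∈ A then dot (col Φ i) w else 0

/-- The vector `Φᵀ w` of all column correlations, as a plain function (so `‖·‖`
is the sup/ℓ∞ norm). -/
def dualVec {m n : ℕ} (Φ : Matrix (Fin m) (Fin n) ℝ) (w : Vec m) : Fin n → ℝ :=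
  fun i => dot (col Φ i) w

/-- `P⊥_S w` : the projection of `w` onto the orthogonal complement of the span
of the columns of `Φ` indexed by `S`. -/
def perpProj {m n : ℕ} (Φ : Matrix (Fin m) (Fin n) ℝ) (S : Finset (Fin n)) (w : Vec m) : Vec m :=
  w - (Submodule.orthogonalProjection (Submodule.span ℝ (col Φ '' (S : Set (Fin n)))) w : Vec m)

/-- The `j`-th largest value (1-indexed) among `{|x i| : i ∈ Γ}` (with
multiplicities); `0` if `j > |Γ|` or `j = 0`. -/
def kthLargest {n : ℕ} (x : Vec n) (Γ : Finset (Fin n)) (j : ℕ) : ℝ :=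
  if 1 ≤ j ∧ j ≤ Γ.card then
    (Multiset.sort (Γ.val.map fun i => |x i|) (· ≤ ·)).getD (Γ.card - j) 0
  else 0

/-! Put `s = ⌈√δ K⌉` and `M = max |x i|`. After `k` iterations at least `s` of the `s + k + 1`
largest entries of `x` are unselected, and there `x` agrees with the error `x - xᵏ`. By the
restricted isometry property `Φᵀ rᵏ` differs from that error by at most
`δ ‖x - xᵏ‖ + √(1 + δ) ‖v‖` in `ℓ²`; for `√δ ≤ 1/4` the bound on the noise makes this at most
`4 √δ M √s`. Hence one of these `s` correlations, and so the selected one, is at least the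
`(s + k + 1)`-th largest entry minus `4 √δ M`, and the iteration lowers the squared residual
by `1 - δ` times the square of that entry, up to a loss of `8 √δ M²`. Telescoping over `K - s`
iterations recovers the energy of all but the `s` largest entries.

The constant is `11 = 2 + 1 + 8`: the spread between `(1 + √δ)(1 + δ)` and `1 - δ`, the `s`
largest entries, and the losses. For `√δ ≥ 1/4` already `‖y‖²` satisfies the bound, as `‖rᵏ‖`
decreases.
-/

open scoped InnerProductSpace

section General

lemma sq_sub_two_mul_mul_le_sq {ξ M η c : ℝ} (hξ : 0 ≤ ξ) (hξM : ξ ≤ M) (hη : 0 ≤ η)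
    (hc : 0 ≤ c) (hgap : ξ - c ≤ η) : ξ ^ 2 - 2 * (η * M) ≤ c ^ 2 := by
  rcases le_total ξ c with hle | hle
  · have : 0 ≤ η * M := mul_nonneg hη (hξ.trans hξM)
    linarith [pow_le_pow_left₀ hξ hle 2]
  · have : (ξ - c) * (ξ + c) ≤ η * (2 * M) := by gcongr; linarith
    linarith

lemma sq_norm_add_le_of_pos {E : Type*} [SeminormedAddCommGroup E] {τ : ℝ} (hτ : 0 < τ)
    (a b : E) : ‖a + b‖ ^ 2 ≤ (1 + τ) * ‖a‖ ^ 2 + (1 + 1 / τ) * ‖b‖ ^ 2 := by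
  have young : 2 * ‖a‖ * ‖b‖ ≤ τ * ‖a‖ ^ 2 + τ⁻¹ * ‖b‖ ^ 2 := two_mul_le_add_mul_sq hτ
  calc ‖a + b‖ ^ 2 ≤ (‖a‖ + ‖b‖) ^ 2 := by gcongr; exact norm_add_le a b
    _ ≤ (1 + τ) * ‖a‖ ^ 2 + (1 + 1 / τ) * ‖b‖ ^ 2 := by rw [one_div]; linarith

lemma abs_inner_map_sub_inner_le {E F : Type*} [NormedAddCommGroup E] [InnerProductSpace ℝ E]
    [SeminormedAddCommGroup F] [InnerProductSpace ℝ F] (f : E →ₗ[ℝ] F) {δ : ℝ} {a u : E}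
    (h : ∀ s t : ℝ,
      |‖f (s • a + t • u)‖ ^ 2 - ‖s • a + t • u‖ ^ 2| ≤ δ * ‖s • a + t • u‖ ^ 2) :
    |⟪f a, f u⟫_ℝ - ⟪a, u⟫_ℝ| ≤ δ * ‖a‖ * ‖u‖ := by
  have polarized (s t : ℝ) : 2 * |s * t * (⟪f a, f u⟫_ℝ - ⟪a, u⟫_ℝ)| ≤
      δ * (s ^ 2 * ‖a‖ ^ 2 + t ^ 2 * ‖u‖ ^ 2) := by
    have plus := abs_le.1 (h s t)
    have minus := abs_le.1 (h s (-t))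
    simp only [map_add, map_smul, norm_add_sq_real, norm_smul, mul_pow, Real.norm_eq_abs, sq_abs,
      real_inner_smul_left, real_inner_smul_right] at plus minus
    rw [← abs_two, ← abs_mul, abs_le]
    constructor <;> nlinarith
  rcases eq_or_ne a 0 with rfl | ha
  · simp
  rcases eq_or_ne u 0 with rfl | hu
  · simp
  have hpos : 0 < ‖u‖ * ‖a‖ := mul_pos (norm_pos_iff.2 hu) (norm_pos_iff.2 ha)
  -- With these weights both terms on the right of `polarized` equal `‖a‖² ‖u‖²`.
  have balanced := polarized ‖u‖ ‖a‖
  rw [abs_mul, abs_of_pos hpos] at balanced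
  refine le_of_mul_le_mul_left ?_ hpos
  linarith

lemma exists_equiv_fin_lt_card_filter_le {ι α : Type*} [LinearOrder α] {N : ℕ} {T : Finset ι}
    (hT : #T = N) (f : ι → α) :
    ∃ e : Fin N ≃ T, ∀ j : Fin N, j < #{i ∈ T | f (e j) ≤ f i} := by
  let e₀ := (equivFinOfCardEq hT).symm
  let e := (Tuple.sort fun j => OrderDual.toDual (f (e₀ j))).trans e₀
  have anti : Antitone fun j => f (e j) :=
    Tuple.monotone_sort fun j => OrderDual.toDual (f (e₀ j))
  refine ⟨e, fun j => ?_⟩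
  calc (j : ℕ) < #((Iic j).map (e.toEmbedding.trans (.subtype _))) := by
        rw [card_map, Fin.card_Iic]; exact Nat.lt_succ_self _
    _ ≤ #{i ∈ T | f (e j) ≤ f i} := card_le_card fun i hi => by
        obtain ⟨l, hl, rfl⟩ := mem_map.1 hi
        exact mem_filter.2 ⟨(e l).2, anti (mem_Iic.1 hl)⟩

end General

section Vectors

variable {m n : ℕ}

lemma dot_eq_inner (u w : Vec n) : dot u w = ⟪w, u⟫_ℝ := rfl

lemma mulVec'_eq_toEuclideanLin (Φ : Matrix (Fin m) (Fin n) ℝ) (u : Vec n) :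
    mulVec' Φ u = Matrix.toEuclideanLin Φ u := rfl

lemma mulVec'_single (Φ : Matrix (Fin m) (Fin n) ℝ) (j : Fin n) :
    mulVec' Φ (EuclideanSpace.single j 1) = col Φ j := by
  ext i; simp [mulVec', col]

lemma inner_mulVec' (Φ : Matrix (Fin m) (Fin n) ℝ) (u : Vec n) (w : Vec m) :
    ⟪mulVec' Φ u, w⟫_ℝ = ⟪u, mulVec' Φ.transpose w⟫_ℝ := by
  rw [mulVec'_eq_toEuclideanLin, mulVec'_eq_toEuclideanLin,
    ← Matrix.conjTranspose_eq_transpose_of_trivial,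
    Matrix.toEuclideanLin_conjTranspose_eq_adjoint, LinearMap.adjoint_inner_right]

lemma transpose_mulVec'_apply (Φ : Matrix (Fin m) (Fin n) ℝ) (w : Vec m) (i : Fin n) :
    mulVec' Φ.transpose w i = dot (col Φ i) w := rfl

lemma suppF_subset_iff {u : Vec n} {S : Finset (Fin n)} :
    suppF u ⊆ S ↔ ∀ i ∉ S, u i = 0 := by
  simp only [subset_iff, suppF, mem_filter, mem_univ, true_and]
  exact forall_congr' fun _ => not_imp_comm

lemma suppF_smul_add_smul_subset (s t : ℝ) (u w : Vec n) :
    suppF (s • u + t • w) ⊆ suppF u ∪ suppF w := by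
  refine suppF_subset_iff.2 fun i hi => ?_
  obtain ⟨hu, hw⟩ := notMem_union.1 hi
  simp [suppF_subset_iff.1 Subset.rfl i hu, suppF_subset_iff.1 Subset.rfl i hw]

lemma suppF_sub_subset (u w : Vec n) : suppF (u - w) ⊆ suppF u ∪ suppF w := by
  simpa [← sub_eq_add_neg] using suppF_smul_add_smul_subset 1 (-1) u w

lemma suppF_single_subset (j : Fin n) (c : ℝ) : suppF (EuclideanSpace.single j c) ⊆ {j} :=
  suppF_subset_iff.2 fun i hi => by simp [notMem_singleton.1 hi]

lemma sq_norm_eq_sum_of_suppF_subset {x : Vec n} {S : Finset (Fin n)} (hx : suppF x ⊆ S) :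
    ‖x‖ ^ 2 = ∑ i ∈ S, |x i| ^ 2 := by
  rw [EuclideanSpace.norm_sq_eq]
  refine (sum_subset (subset_univ S) fun i _ hi => ?_).symm
  simp [suppF_subset_iff.1 hx i hi]

lemma sq_norm_le_card_mul_sq {x : Vec n} {S : Finset (Fin n)} (hx : suppF x ⊆ S) {M : ℝ}
    (hM : ∀ i ∈ S, |x i| ≤ M) : ‖x‖ ^ 2 ≤ #S * M ^ 2 := by
  rw [sq_norm_eq_sum_of_suppF_subset hx, ← nsmul_eq_mul]
  exact sum_le_card_nsmul _ _ _ fun i hi => pow_le_pow_left₀ (abs_nonneg _) (hM i hi) 2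

lemma restrict_apply (x : Vec n) (A : Finset (Fin n)) (i : Fin n) :
    restrict x A i = if i ∈ A then x i else 0 := rfl

lemma suppF_restrict_subset (x : Vec n) (A : Finset (Fin n)) : suppF (restrict x A) ⊆ A :=
  suppF_subset_iff.2 fun _ hi => if_neg hi

lemma inner_restrict_self (x : Vec n) (A : Finset (Fin n)) :
    ⟪restrict x A, x⟫_ℝ = ‖restrict x A‖ ^ 2 := by
  simp only [← real_inner_self_eq_norm_sq, PiLp.inner_apply, restrict_apply]
  refine sum_congr rfl fun i _ => ?_
  split_ifs <;> simp

lemma sqrt_card_mul_le_norm_restrict {x : Vec n} {A : Finset (Fin n)} {ξ : ℝ}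
    (hξ : ∀ i ∈ A, ξ ≤ |x i|) : √(#A) * ξ ≤ ‖restrict x A‖ := by
  rcases le_total ξ 0 with hneg | hpos
  · exact (mul_nonpos_of_nonneg_of_nonpos (Real.sqrt_nonneg _) hneg).trans (norm_nonneg _)
  refine le_of_sq_le_sq ?_ (norm_nonneg _)
  rw [mul_pow, Real.sq_sqrt (Nat.cast_nonneg _), ← nsmul_eq_mul,
    sq_norm_eq_sum_of_suppF_subset (suppF_restrict_subset x A)]
  refine card_nsmul_le_sum _ _ _ fun i hi => ?_
  simpa [restrict_apply, hi] using pow_le_pow_left₀ hpos (hξ i hi) 2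

end Vectors

section RestrictedIsometry

variable {m n L : ℕ} {Φ : Matrix (Fin m) (Fin n) ℝ} {δ : ℝ}

/-- `IsRIPBound Φ L δ`: the restricted isometry inequalities of order `L` hold with `δ`, which
need not be the smallest such constant, as it is in `RIPConst`. -/
def IsRIPBound (Φ : Matrix (Fin m) (Fin n) ℝ) (L : ℕ) (δ : ℝ) : Prop :=
  ∀ u : Vec n, #(suppF u) ≤ L →
    (1 - δ) * ‖u‖ ^ 2 ≤ ‖mulVec' Φ u‖ ^ 2 ∧ ‖mulVec' Φ u‖ ^ 2 ≤ (1 + δ) * ‖u‖ ^ 2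

namespace IsRIPBound

lemma norm_mulVec'_le (hΦ : IsRIPBound Φ L δ) {u : Vec n} (hu : #(suppF u) ≤ L) :
    ‖mulVec' Φ u‖ ≤ √(1 + δ) * ‖u‖ := by
  rw [← Real.sqrt_sq (norm_nonneg (mulVec' Φ u)), ← Real.sqrt_sq (norm_nonneg u),
    ← Real.sqrt_mul' _ (sq_nonneg _)]
  exact Real.sqrt_le_sqrt (hΦ u hu).2

lemma sq_norm_col_le (hΦ : IsRIPBound Φ L δ) (hL : 1 ≤ L) (j : Fin n) :
    ‖col Φ j‖ ^ 2 ≤ 1 + δ := by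
  simpa [mulVec'_single] using
    (hΦ (EuclideanSpace.single j 1) ((card_le_card (suppF_single_subset j 1)).trans hL)).2

lemma abs_inner_mulVec'_sub_inner_le (hΦ : IsRIPBound Φ L δ) {a u : Vec n}
    (hau : #(suppF a ∪ suppF u) ≤ L) :
    |⟪mulVec' Φ a, mulVec' Φ u⟫_ℝ - ⟪a, u⟫_ℝ| ≤ δ * ‖a‖ * ‖u‖ := by
  refine abs_inner_map_sub_inner_le (Matrix.toEuclideanLin Φ) fun s t => ?_
  obtain ⟨lower, upper⟩ :=
    hΦ (s • a + t • u) ((card_le_card (suppF_smul_add_smul_subset s t a u)).trans hau)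
  rw [← mulVec'_eq_toEuclideanLin, abs_le]
  constructor <;> linarith

lemma norm_restrict_transpose_mulVec'_sub_le (hΦ : IsRIPBound Φ L δ) (hδ : 0 ≤ δ)
    {u : Vec n} {A : Finset (Fin n)} (hA : #(A ∪ suppF u) ≤ L) (v : Vec m) :
    ‖restrict (mulVec' Φ.transpose (mulVec' Φ u + v) - u) A‖ ≤ δ * ‖u‖ + √(1 + δ) * ‖v‖ := by
  set z := restrict (mulVec' Φ.transpose (mulVec' Φ u + v) - u) A with hz
  have hzA : suppF z ⊆ A := suppF_restrict_subset _ A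
  have expand : ‖z‖ ^ 2 =
      (⟪mulVec' Φ z, mulVec' Φ u⟫_ℝ - ⟪z, u⟫_ℝ) + ⟪mulVec' Φ z, v⟫_ℝ := by
    rw [hz, ← inner_restrict_self, ← hz, inner_sub_right, ← inner_mulVec', inner_add_right]
    ring
  have signal : ⟪mulVec' Φ z, mulVec' Φ u⟫_ℝ - ⟪z, u⟫_ℝ ≤ δ * ‖z‖ * ‖u‖ :=
    (le_abs_self _).trans <| hΦ.abs_inner_mulVec'_sub_inner_le <|
      (card_le_card (union_subset_union_left hzA)).trans hA
  have noise : ⟪mulVec' Φ z, v⟫_ℝ ≤ √(1 + δ) * ‖z‖ * ‖v‖ := by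
    have hzL : #(suppF z) ≤ L := (card_le_card (hzA.trans subset_union_left)).trans hA
    exact (real_inner_le_norm _ _).trans (by gcongr; exact hΦ.norm_mulVec'_le hzL)
  rcases (norm_nonneg z).eq_or_lt with hz0 | hz0
  · rw [← hz0]; positivity
  refine le_of_mul_le_mul_left ?_ hz0
  linarith

end IsRIPBound

end RestrictedIsometry

section OrthogonalMatchingPursuit

variable {m n N k : ℕ} {Φ : Matrix (Fin m) (Fin n) ℝ} {y : Vec m}

namespace OMPRun

lemma res_eq (run : OMPRun Φ y N) (hk : k ≤ N) : run.res k = y - mulVec' Φ (run.est k) := by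
  cases k with
  | zero => rw [run.res_zero, run.est_zero, mulVec'_eq_toEuclideanLin, map_zero, sub_zero]
  | succ k => exact run.res_succ k hk

lemma res_eq_mulVec'_sub_add {x : Vec n} {v : Vec m} (run : OMPRun Φ (mulVec' Φ x + v) N)
    (hk : k ≤ N) : run.res k = mulVec' Φ (x - run.est k) + v := by
  rw [run.res_eq hk]
  simp only [mulVec'_eq_toEuclideanLin, map_sub]
  abel

lemma suppF_est_subset (run : OMPRun Φ y N) (hk : k ≤ N) : suppF (run.est k) ⊆ run.sets k := by
  cases k with
  | zero => simp [run.est_zero, suppF]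
  | succ k => exact run.est_supp k hk

lemma card_sets_le (run : OMPRun Φ y N) (hk : k ≤ N) : #(run.sets k) ≤ k := by
  induction k with
  | zero => simp [run.sets_zero]
  | succ k ih =>
    rw [run.sets_succ k hk]
    exact (card_insert_le _ _).trans (Nat.succ_le_succ (ih (Nat.le_of_succ_le hk)))

lemma card_union_suppF_sub_est_le (run : OMPRun Φ y N) (hk : k ≤ N) {x : Vec n}
    {A T : Finset (Fin n)} (hA : A ⊆ T) (hx : suppF x ⊆ T) :
    #(A ∪ suppF (x - run.est k)) ≤ #T + k := by
  have hsub : A ∪ suppF (x - run.est k) ⊆ T ∪ run.sets k :=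
    union_subset (hA.trans subset_union_left) <| (suppF_sub_subset x (run.est k)).trans <|
      union_subset_union hx (run.suppF_est_subset hk)
  calc #(A ∪ suppF (x - run.est k)) ≤ #(T ∪ run.sets k) := card_le_card hsub
    _ ≤ #T + k := (card_union_le _ _).trans (Nat.add_le_add_left (run.card_sets_le hk) _)

lemma norm_res_succ_le (run : OMPRun Φ y N) (hk : k < N) (t : ℝ) :
    ‖run.res (k + 1)‖ ≤ ‖run.res k - t • col Φ (run.idx (k + 1))‖ := by
  set e : Vec n := EuclideanSpace.single (run.idx (k + 1)) 1 with he
  have feasible : suppF ((1 : ℝ) • run.est k + t • e) ⊆ run.sets (k + 1) := by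
    rw [run.sets_succ k hk, insert_eq, union_comm]
    exact (suppF_smul_add_smul_subset 1 t _ _).trans
      (union_subset_union (run.suppF_est_subset hk.le) (suppF_single_subset _ 1))
  have hmin := run.est_min k hk _ feasible
  rwa [← run.res_succ k hk, mulVec'_eq_toEuclideanLin, map_add, map_smul, map_smul, one_smul,
    ← mulVec'_eq_toEuclideanLin, ← mulVec'_eq_toEuclideanLin, he, mulVec'_single, ← sub_sub,
    ← run.res_eq hk.le] at hmin

lemma norm_res_le_norm_res (run : OMPRun Φ y N) {j : ℕ} (hjk : j ≤ k) (hk : k ≤ N) :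
    ‖run.res k‖ ≤ ‖run.res j‖ := by
  induction k, hjk using Nat.le_induction with
  | base => exact le_rfl
  | succ k _ ih =>
    calc ‖run.res (k + 1)‖ ≤ ‖run.res k‖ := by simpa using run.norm_res_succ_le hk 0
      _ ≤ ‖run.res j‖ := ih (Nat.le_of_succ_le hk)

lemma norm_res_le (run : OMPRun Φ y N) (hk : k ≤ N) : ‖run.res k‖ ≤ ‖y‖ :=
  (run.norm_res_le_norm_res k.zero_le hk).trans_eq (congrArg norm run.res_zero)

lemma sq_norm_res_succ_le (run : OMPRun Φ y N) (hk : k < N) :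
    ‖run.res (k + 1)‖ ^ 2 ≤ ‖run.res k‖ ^ 2 -
      (2 - ‖col Φ (run.idx (k + 1))‖ ^ 2) * dot (col Φ (run.idx (k + 1))) (run.res k) ^ 2 := by
  set φ := col Φ (run.idx (k + 1))
  set d := dot φ (run.res k) with hd
  calc ‖run.res (k + 1)‖ ^ 2 ≤ ‖run.res k - d • φ‖ ^ 2 := by
        gcongr; exact run.norm_res_succ_le hk d
    _ = ‖run.res k‖ ^ 2 - (2 - ‖φ‖ ^ 2) * d ^ 2 := by
        rw [norm_sub_sq_real, real_inner_smul_right, ← dot_eq_inner, ← hd, norm_smul, mul_pow,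
          Real.norm_eq_abs, sq_abs]
        ring

lemma sqrt_card_mul_sub_abs_dot_le {x : Vec n} {v : Vec m}
    (run : OMPRun Φ (mulVec' Φ x + v) N) (hk : k < N) {L : ℕ} {δ : ℝ}
    (hΦ : IsRIPBound Φ L δ) (hδ : 0 ≤ δ) {A : Finset (Fin n)} (hAk : Disjoint A (run.sets k))
    (hAL : #(A ∪ suppF (x - run.est k)) ≤ L) {ξ : ℝ} (hξ : ∀ i ∈ A, ξ ≤ |x i|) :
    √(#A) * (ξ - |dot (col Φ (run.idx (k + 1))) (run.res k)|) ≤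
      δ * ‖x - run.est k‖ + √(1 + δ) * ‖v‖ := by
  refine le_trans (sqrt_card_mul_le_norm_restrict fun i hi => ?_)
    (hΦ.norm_restrict_transpose_mulVec'_sub_le hδ hAL v)
  have hik : i ∉ run.sets k := disjoint_left.1 hAk hi
  have est_zero : run.est k i = 0 := suppF_subset_iff.1 (run.suppF_est_subset hk.le) i hik
  rw [← run.res_eq_mulVec'_sub_add hk.le, PiLp.sub_apply, PiLp.sub_apply, est_zero, sub_zero,
    transpose_mulVec'_apply, abs_sub_comm]
  calc ξ - |dot (col Φ (run.idx (k + 1))) (run.res k)|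
      ≤ |x i| - |dot (col Φ i) (run.res k)| := sub_le_sub (hξ i hi) (run.idx_max k hk i hik)
    _ ≤ |x i - dot (col Φ i) (run.res k)| := abs_sub_abs_le_abs_sub _ _

lemma norm_mulVec'_sub_est_le {x : Vec n} {v : Vec m} (run : OMPRun Φ (mulVec' Φ x + v) N)
    (hk : k ≤ N) : ‖mulVec' Φ (x - run.est k)‖ ≤ ‖mulVec' Φ x‖ + 2 * ‖v‖ := by
  calc ‖mulVec' Φ (x - run.est k)‖ = ‖run.res k - v‖ := by
        rw [run.res_eq_mulVec'_sub_add hk, add_sub_cancel_right]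
    _ ≤ ‖run.res k‖ + ‖v‖ := norm_sub_le _ _
    _ ≤ ‖mulVec' Φ x + v‖ + ‖v‖ := by gcongr; exact run.norm_res_le hk
    _ ≤ ‖mulVec' Φ x‖ + ‖v‖ + ‖v‖ := by gcongr; exact norm_add_le _ _
    _ = ‖mulVec' Φ x‖ + 2 * ‖v‖ := by ring

end OMPRun

end OrthogonalMatchingPursuit

section NoisyRecovery

variable {m n K k s : ℕ} {Φ : Matrix (Fin m) (Fin n) ℝ} {δ M : ℝ} {x : Vec n} {v : Vec m}
  {T : Finset (Fin n)}

lemma IsRIPBound.sqrt_one_add_mul_norm_noise_le {L : ℕ} (hΦ : IsRIPBound Φ L δ) (h0 : 0 ≤ δ)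
    (h1 : δ ≤ 1) (hx : #(suppF x) ≤ L) (hv : ‖v‖ ^ 2 ≤ √δ ^ 3 * ‖mulVec' Φ x‖ ^ 2) :
    √(1 + δ) * ‖v‖ ≤ 2 * (√δ * (√√δ * ‖x‖)) := by
  refine le_of_sq_le_sq ?_ (by positivity)
  calc (√(1 + δ) * ‖v‖) ^ 2 = (1 + δ) * ‖v‖ ^ 2 := by
        rw [mul_pow, Real.sq_sqrt (by positivity)]
    _ ≤ (1 + δ) * (√δ ^ 3 * ((1 + δ) * ‖x‖ ^ 2)) := by
        gcongr; exact hv.trans (by gcongr; exact (hΦ x hx).2)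
    _ = (1 + δ) ^ 2 * (√δ ^ 3 * ‖x‖ ^ 2) := by ring
    _ ≤ 2 ^ 2 * (√δ ^ 3 * ‖x‖ ^ 2) := by gcongr; linarith
    _ = (2 * (√δ * (√√δ * ‖x‖))) ^ 2 := by
        simp only [mul_pow, Real.sq_sqrt (Real.sqrt_nonneg δ)]; ring

lemma IsRIPBound.sq_norm_mulVec'_add_le {L : ℕ} (hΦ : IsRIPBound Φ L δ)
    (hx : #(suppF x) ≤ L) {τ : ℝ} (hτ : 0 < τ) (v : Vec m) :
    ‖mulVec' Φ x + v‖ ^ 2 ≤ (1 + τ) * (1 + δ) * ‖x‖ ^ 2 + (1 + 1 / τ) * ‖v‖ ^ 2 := by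
  refine (sq_norm_add_le_of_pos hτ _ _).trans ?_
  rw [mul_assoc]
  gcongr
  exact (hΦ x hx).2

namespace OMPRun

lemma mul_norm_sub_est_le (run : OMPRun Φ (mulVec' Φ x + v) K) (hk : k ≤ K)
    (hΦ : IsRIPBound Φ (2 * K) δ) (h0 : 0 ≤ δ) (hδ : √δ ≤ 1 / 4) (hx : suppF x ⊆ T)
    (hT : #T = K) (hv : ‖v‖ ^ 2 ≤ √δ ^ 3 * ‖mulVec' Φ x‖ ^ 2) :
    δ * ‖x - run.est k‖ ≤ 2 * (√δ * (√√δ * ‖x‖)) := by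
  have hτδ : √δ ^ 2 = δ := Real.sq_sqrt h0
  have δ_le : δ ≤ 1 / 16 := by nlinarith [Real.sqrt_nonneg δ]
  have x_sparse : #(suppF x) ≤ 2 * K := (card_le_card hx).trans (by omega)
  have u_sparse : #(suppF (x - run.est k)) ≤ 2 * K := by
    simpa using (run.card_union_suppF_sub_est_le hk (empty_subset T) hx).trans (by omega)
  have noise_le : ‖v‖ ≤ ‖mulVec' Φ x‖ := by
    refine le_of_sq_le_sq (hv.trans ?_) (norm_nonneg _)
    exact mul_le_of_le_one_left (sq_nonneg _)
      (pow_le_one₀ (Real.sqrt_nonneg δ) (hδ.trans (by norm_num)))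
  have image_le : ‖mulVec' Φ (x - run.est k)‖ ≤ 3 * ‖mulVec' Φ x‖ := by
    linarith [run.norm_mulVec'_sub_est_le hk]
  have error_le : (1 - δ) * ‖x - run.est k‖ ^ 2 ≤ 9 * ((1 + δ) * ‖x‖ ^ 2) := by
    calc (1 - δ) * ‖x - run.est k‖ ^ 2 ≤ ‖mulVec' Φ (x - run.est k)‖ ^ 2 := (hΦ _ u_sparse).1
      _ ≤ (3 * ‖mulVec' Φ x‖) ^ 2 := by gcongr
      _ = 9 * ‖mulVec' Φ x‖ ^ 2 := by ring
      _ ≤ 9 * ((1 + δ) * ‖x‖ ^ 2) := by gcongr; exact (hΦ x x_sparse).2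
  have error_le' : ‖x - run.est k‖ ^ 2 ≤ 16 * ‖x‖ ^ 2 := by
    nlinarith [sq_nonneg ‖x‖, sq_nonneg ‖x - run.est k‖]
  refine le_of_sq_le_sq ?_ (by positivity)
  calc (δ * ‖x - run.est k‖) ^ 2 = √δ * (√δ ^ 3 * ‖x - run.est k‖ ^ 2) := by
        nth_rewrite 1 [← hτδ]; ring
    _ ≤ 1 / 4 * (√δ ^ 3 * (16 * ‖x‖ ^ 2)) := by gcongr
    _ = (2 * (√δ * (√√δ * ‖x‖))) ^ 2 := by
        simp only [mul_pow, Real.sq_sqrt (Real.sqrt_nonneg δ)]; ring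

lemma sub_abs_dot_le (run : OMPRun Φ (mulVec' Φ x + v) K) (hk : k < K)
    (hΦ : IsRIPBound Φ (2 * K) δ) (h0 : 0 ≤ δ) (hδ : √δ ≤ 1 / 4) (hx : suppF x ⊆ T)
    (hT : #T = K) (hv : ‖v‖ ^ 2 ≤ √δ ^ 3 * ‖mulVec' Φ x‖ ^ 2) (hs : 0 < s)
    (hsM : √√δ * ‖x‖ ≤ √s * M) (hM : 0 ≤ M) {ξ : ℝ} (hξ : s + k ≤ #{i ∈ T | ξ ≤ |x i|}) :
    ξ - |dot (col Φ (run.idx (k + 1))) (run.res k)| ≤ 4 * √δ * M := by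
  set A := {i ∈ T | ξ ≤ |x i|} \ run.sets k
  have hAT : A ⊆ T := sdiff_subset.trans (filter_subset _ _)
  have s_le : s ≤ #A := by
    have : _ ≤ #A := le_card_sdiff (run.sets k) {i ∈ T | ξ ≤ |x i|}
    have := run.card_sets_le hk.le
    omega
  have hδ1 : δ ≤ 1 := Real.sqrt_le_one.1 (hδ.trans (by norm_num))
  have corr := run.sqrt_card_mul_sub_abs_dot_le hk hΦ h0 sdiff_disjoint
    ((run.card_union_suppF_sub_est_le hk.le hAT hx).trans (by omega))
    fun i hi => (mem_filter.1 (mem_sdiff.1 hi).1).2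
  have signal := run.mul_norm_sub_est_le hk.le hΦ h0 hδ hx hT hv
  have noise := hΦ.sqrt_one_add_mul_norm_noise_le h0 hδ1 ((card_le_card hx).trans (by omega)) hv
  refine le_of_mul_le_mul_left ?_ (Real.sqrt_pos.2 (Nat.cast_pos.2 (hs.trans_le s_le)))
  calc √(#A) * (ξ - |dot (col Φ (run.idx (k + 1))) (run.res k)|)
      ≤ 4 * √δ * (√√δ * ‖x‖) := by linarith
    _ ≤ 4 * √δ * (√(#A) * M) := by
        refine mul_le_mul_of_nonneg_left (hsM.trans ?_) (by positivity)
        gcongr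
    _ = √(#A) * (4 * √δ * M) := by ring

lemma sq_norm_res_succ_le_sub (run : OMPRun Φ (mulVec' Φ x + v) K) (hk : k < K)
    (hΦ : IsRIPBound Φ (2 * K) δ) (h0 : 0 ≤ δ) (hδ : √δ ≤ 1 / 4) (hx : suppF x ⊆ T)
    (hT : #T = K) (hv : ‖v‖ ^ 2 ≤ √δ ^ 3 * ‖mulVec' Φ x‖ ^ 2) (hs : 0 < s)
    (hsM : √√δ * ‖x‖ ≤ √s * M) {ξ : ℝ} (hξ0 : 0 ≤ ξ) (hξM : ξ ≤ M)
    (hξ : s + k ≤ #{i ∈ T | ξ ≤ |x i|}) :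
    ‖run.res (k + 1)‖ ^ 2 ≤ ‖run.res k‖ ^ 2 - (1 - δ) * (ξ ^ 2 - 8 * √δ * M ^ 2) := by
  set d := dot (col Φ (run.idx (k + 1))) (run.res k)
  have hδ1 : δ ≤ 1 := Real.sqrt_le_one.1 (hδ.trans (by norm_num))
  have gap : ξ - |d| ≤ 4 * √δ * M :=
    run.sub_abs_dot_le hk hΦ h0 hδ hx hT hv hs hsM (hξ0.trans hξM) hξ
  have corr : ξ ^ 2 - 8 * √δ * M ^ 2 ≤ d ^ 2 := by
    have hη : 0 ≤ 4 * √δ * M := mul_nonneg (by positivity) (hξ0.trans hξM)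
    have := sq_sub_two_mul_mul_le_sq hξ0 hξM hη (abs_nonneg d) gap
    rw [sq_abs] at this
    linarith
  have col_le : 1 - δ ≤ 2 - ‖col Φ (run.idx (k + 1))‖ ^ 2 := by
    linarith [hΦ.sq_norm_col_le (by omega) (run.idx (k + 1))]
  calc ‖run.res (k + 1)‖ ^ 2
      ≤ ‖run.res k‖ ^ 2 - (2 - ‖col Φ (run.idx (k + 1))‖ ^ 2) * d ^ 2 :=
        run.sq_norm_res_succ_le hk
    _ ≤ ‖run.res k‖ ^ 2 - (1 - δ) * d ^ 2 := by gcongr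
    _ ≤ ‖run.res k‖ ^ 2 - (1 - δ) * (ξ ^ 2 - 8 * √δ * M ^ 2) := by
        gcongr

lemma sq_norm_res_le_sub (run : OMPRun Φ (mulVec' Φ x + v) K)
    (hΦ : IsRIPBound Φ (2 * K) δ) (h0 : 0 ≤ δ) (hδ : √δ ≤ 1 / 4) (hx : suppF x ⊆ T)
    (hT : #T = K) (hM : ∀ i ∈ T, |x i| ≤ M) (hv : ‖v‖ ^ 2 ≤ √δ ^ 3 * ‖mulVec' Φ x‖ ^ 2)
    (hs : 0 < s) (hsK : s ≤ K) (hsM : √√δ * ‖x‖ ≤ √s * M) :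
    ‖run.res K‖ ^ 2 ≤ ‖mulVec' Φ x + v‖ ^ 2 -
      (1 - δ) * (‖x‖ ^ 2 - s * M ^ 2 - K * (8 * √δ * M ^ 2)) := by
  have hδ1 : δ ≤ 1 := Real.sqrt_le_one.1 (hδ.trans (by norm_num))
  obtain ⟨N, hN⟩ := Nat.exists_eq_add_of_le hsK
  obtain ⟨e, he⟩ := exists_equiv_fin_lt_card_filter_le (hT.trans hN) fun i => |x i|
  set a : Fin (s + N) → ℝ := fun j => |x (e j)|
  have a_le (j : Fin (s + N)) : a j ≤ M := hM _ (e j).2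
  have energy : ‖x‖ ^ 2 =
      ∑ j : Fin s, a (Fin.castAdd N j) ^ 2 + ∑ j : Fin N, a (Fin.natAdd s j) ^ 2 := by
    rw [sq_norm_eq_sum_of_suppF_subset hx, ← Fin.sum_univ_add fun j => a j ^ 2,
      Equiv.sum_comp e fun i : T => |x i| ^ 2, sum_coe_sort T fun i => |x i| ^ 2]
  have head : ∑ j : Fin s, a (Fin.castAdd N j) ^ 2 ≤ s * M ^ 2 := by
    simpa using sum_le_card_nsmul univ (fun j : Fin s => a (Fin.castAdd N j) ^ 2) (M ^ 2)
      fun j _ => pow_le_pow_left₀ (abs_nonneg _) (a_le _) 2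
  have drop (j : Fin N) : (1 - δ) * (a (Fin.natAdd s j) ^ 2 - 8 * √δ * M ^ 2) ≤
      ‖run.res j‖ ^ 2 - ‖run.res (j + 1)‖ ^ 2 := by
    have hj : s + (j : ℕ) ≤ #{i ∈ T | a (Fin.natAdd s j) ≤ |x i|} := (he (Fin.natAdd s j)).le
    linarith [run.sq_norm_res_succ_le_sub (by omega) hΦ h0 hδ hx hT hv hs hsM
      (abs_nonneg _) (a_le _) hj]
  have telescope := sum_le_sum fun (j : Fin N) (_ : j ∈ univ) => drop j
  rw [Fin.sum_univ_eq_sum_range (fun j => ‖run.res j‖ ^ 2 - ‖run.res (j + 1)‖ ^ 2),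
    sum_range_sub' (fun j => ‖run.res j‖ ^ 2), ← mul_sum, sum_sub_distrib, sum_const, card_univ,
    Fintype.card_fin, nsmul_eq_mul, run.res_zero] at telescope
  have res_le_res : ‖run.res K‖ ^ 2 ≤ ‖run.res N‖ ^ 2 := by
    gcongr; exact run.norm_res_le_norm_res (by omega) le_rfl
  have loss : (N : ℝ) * (8 * √δ * M ^ 2) ≤ K * (8 * √δ * M ^ 2) := by gcongr; omega
  calc ‖run.res K‖ ^ 2
      ≤ ‖mulVec' Φ x + v‖ ^ 2 -
          (1 - δ) * (∑ j : Fin N, a (Fin.natAdd s j) ^ 2 - N * (8 * √δ * M ^ 2)) := by linarith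
    _ ≤ ‖mulVec' Φ x + v‖ ^ 2 - (1 - δ) * (‖x‖ ^ 2 - s * M ^ 2 - K * (8 * √δ * M ^ 2)) := by
        gcongr; linarith

lemma sq_norm_res_le_of_sqrt_le (run : OMPRun Φ (mulVec' Φ x + v) K)
    (hΦ : IsRIPBound Φ (2 * K) δ) (h0 : 0 < δ) (hδ : √δ ≤ 1 / 4) (hx : suppF x ⊆ T)
    (hT : #T = K) (hK : 1 ≤ K) (hM : ∀ i ∈ T, |x i| ≤ M)
    (hv : ‖v‖ ^ 2 ≤ √δ ^ 3 * ‖mulVec' Φ x‖ ^ 2) :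
    ‖run.res K‖ ^ 2 ≤ 11 * (⌈√δ * K⌉₊ : ℝ) * M ^ 2 + (1 + 1 / √δ) * ‖v‖ ^ 2 := by
  have hτ0 : 0 < √δ := Real.sqrt_pos.2 h0
  have hτδ : √δ ^ 2 = δ := Real.sq_sqrt h0.le
  set s := ⌈√δ * K⌉₊
  have hs : 0 < s := Nat.ceil_pos.2 (by positivity)
  have hsK : s ≤ K :=
    Nat.ceil_le.2 (mul_le_of_le_one_left (Nat.cast_nonneg K) (hδ.trans (by norm_num)))
  obtain ⟨i, hi⟩ : T.Nonempty := card_pos.1 (by omega)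
  have hM0 : 0 ≤ M := (abs_nonneg _).trans (hM i hi)
  have signal_le : √δ * ‖x‖ ^ 2 ≤ √δ * K * M ^ 2 := by
    rw [mul_assoc, ← hT]; gcongr; exact sq_norm_le_card_mul_sq hx hM
  have ceil_le : √δ * K * M ^ 2 ≤ s * M ^ 2 := by gcongr; exact Nat.le_ceil _
  have hsM : √√δ * ‖x‖ ≤ √s * M := by
    refine le_of_sq_le_sq ?_ (by positivity)
    rw [mul_pow, mul_pow, Real.sq_sqrt hτ0.le, Real.sq_sqrt (Nat.cast_nonneg s)]
    exact signal_le.trans ceil_le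
  have residual := run.sq_norm_res_le_sub hΦ h0.le hδ hx hT hM hv hs hsK hsM
  have data := hΦ.sq_norm_mulVec'_add_le ((card_le_card hx).trans (by omega)) hτ0 v
  have spread : ((1 + √δ) * (1 + δ) - (1 - δ)) * ‖x‖ ^ 2 ≤ 2 * (s * M ^ 2) := by
    calc ((1 + √δ) * (1 + δ) - (1 - δ)) * ‖x‖ ^ 2 ≤ 2 * √δ * ‖x‖ ^ 2 := by
          gcongr; nlinarith [hτδ]
      _ ≤ 2 * (s * M ^ 2) := by linarith
  have loss : (1 - δ) * (s * M ^ 2 + K * (8 * √δ * M ^ 2)) ≤ 9 * (s * M ^ 2) := by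
    calc (1 - δ) * (s * M ^ 2 + K * (8 * √δ * M ^ 2))
        ≤ s * M ^ 2 + K * (8 * √δ * M ^ 2) :=
          mul_le_of_le_one_left (by positivity) (by linarith)
      _ ≤ 9 * (s * M ^ 2) := by linarith
  linarith

lemma sq_norm_res_le_of_le_sqrt (run : OMPRun Φ (mulVec' Φ x + v) K)
    (hΦ : IsRIPBound Φ (2 * K) δ) (h1 : δ < 1) (hδ : 1 / 4 ≤ √δ) (hx : suppF x ⊆ T)
    (hT : #T = K) (hM : ∀ i ∈ T, |x i| ≤ M) :
    ‖run.res K‖ ^ 2 ≤ 11 * (⌈√δ * K⌉₊ : ℝ) * M ^ 2 + (1 + 1 / √δ) * ‖v‖ ^ 2 := by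
  have hτ0 : 0 < √δ := lt_of_lt_of_le (by norm_num) hδ
  have hτδ : √δ ^ 2 = δ := Real.sq_sqrt (Real.sqrt_pos.1 hτ0).le
  have data := hΦ.sq_norm_mulVec'_add_le ((card_le_card hx).trans (by omega)) hτ0 v
  have factor_le : (1 + √δ) * (1 + δ) ≤ 11 * √δ := by nlinarith [hτδ]
  calc ‖run.res K‖ ^ 2 ≤ ‖mulVec' Φ x + v‖ ^ 2 := by gcongr; exact run.norm_res_le le_rfl
    _ ≤ (1 + √δ) * (1 + δ) * ‖x‖ ^ 2 + (1 + 1 / √δ) * ‖v‖ ^ 2 := data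
    _ ≤ 11 * √δ * (K * M ^ 2) + (1 + 1 / √δ) * ‖v‖ ^ 2 := by
        gcongr; exact hT ▸ sq_norm_le_card_mul_sq hx hM
    _ = 11 * (√δ * K) * M ^ 2 + (1 + 1 / √δ) * ‖v‖ ^ 2 := by ring
    _ ≤ 11 * (⌈√δ * K⌉₊ : ℝ) * M ^ 2 + (1 + 1 / √δ) * ‖v‖ ^ 2 := by
        gcongr; exact Nat.le_ceil _

end OMPRun

lemma sq_norm_le_of_SNR_ge {κ : ℝ} (h0 : 0 < δ) (hκ : 1 ≤ κ) (hv : v ≠ 0)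
    (hSNR : κ ^ 2 * δ ^ (-(3 : ℝ) / 2) ≤ SNR Φ x v) :
    ‖v‖ ^ 2 ≤ √δ ^ 3 * ‖mulVec' Φ x‖ ^ 2 := by
  have hpow : δ ^ (-(3 : ℝ) / 2) = (√δ ^ 3)⁻¹ := by
    rw [Real.sqrt_eq_rpow, ← Real.rpow_natCast, ← Real.rpow_mul h0.le, ← Real.rpow_neg h0.le]
    norm_num
  have hτ : 0 < √δ ^ 3 := by positivity
  have hv2 : 0 < ‖v‖ ^ 2 := by positivity
  have hle : (√δ ^ 3)⁻¹ ≤ ‖mulVec' Φ x‖ ^ 2 / ‖v‖ ^ 2 := by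
    rw [← hpow]
    exact (le_mul_of_one_le_left (by positivity) (one_le_pow₀ hκ)).trans hSNR
  rwa [inv_le_iff_one_le_mul₀' hτ, ← mul_div_assoc, one_le_div hv2] at hle

end NoisyRecovery

lemma one_le_sup'_abs_div_abs {ι : Type*} {T : Finset ι} (hT : T.Nonempty) {x : ι → ℝ}
    (hx : ∀ i ∈ T, x i ≠ 0) :
    1 ≤ (T ×ˢ T).sup' (hT.product hT) fun p => |x p.1| / |x p.2| := by
  obtain ⟨i, hi⟩ := hT
  exact (div_self (abs_ne_zero.2 (hx i hi))).symm.trans_le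
    (le_sup' (fun p : ι × ι => |x p.1| / |x p.2|) (mk_mem_product hi hi))

theorem stmt19_general {m n K : ℕ} {Φ : Matrix (Fin m) (Fin n) ℝ} {δ M : ℝ} {x : Vec n}
    {v : Vec m} {T : Finset (Fin n)} (run : OMPRun Φ (mulVec' Φ x + v) K)
    (hΦ : IsRIPBound Φ (2 * K) δ) (h0 : 0 < δ) (h1 : δ < 1) (hx : suppF x ⊆ T)
    (hT : #T = K) (hK : 1 ≤ K) (hM : ∀ i ∈ T, |x i| ≤ M)
    (hv : ‖v‖ ^ 2 ≤ √δ ^ 3 * ‖mulVec' Φ x‖ ^ 2) :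
    ‖run.res K‖ ^ 2 ≤ 11 * (⌈√δ * K⌉₊ : ℝ) * M ^ 2 + (1 + 1 / √δ) * ‖v‖ ^ 2 := by
  rcases le_total (√δ) (1 / 4) with hsmall | hlarge
  · exact run.sq_norm_res_le_of_sqrt_le hΦ h0 hsmall hx hT hK hM hv
  · exact run.sq_norm_res_le_of_le_sqrt hΦ h1 hlarge hx hT hM

/-- upper bound on the final residual energy:
`‖r^K‖² ≤ 11⌈τK⌉ x_max² + (1 + 1/τ)‖v‖²` with `τ = δ^{1/2}`, under the SNR
condition `SNR ≥ κ² δ^{-3/2}`. -/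
theorem stmt19 {m n K : ℕ} (Φ : Matrix (Fin m) (Fin n) ℝ) (δ : ℝ)
    (x : Vec n) (v y : Vec m) (T : Finset (Fin n)) (hTne : T.Nonempty)
    (hsupp : suppF x = T) (hcard : T.card = K) (hK1 : 1 ≤ K)
    (hRIP : RIPConst Φ (2 * K) δ) (h0 : 0 < δ) (h1 : δ < 1)
    (hv : v ≠ 0) (hy : y = mulVec' Φ x + v)
    (hSNR : SNR Φ x v ≥
      (((T ×ˢ T).sup' (hTne.product hTne) fun p => |x p.1| / |x p.2|)) ^ 2
        * δ ^ (-(3 : ℝ) / 2))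
    (run : OMPRun Φ y K) :
    ‖run.res K‖ ^ 2 ≤
      11 * (⌈Real.sqrt δ * K⌉₊ : ℝ) * (T.sup' hTne fun i => |x i|) ^ 2 +
        (1 + 1 / Real.sqrt δ) * ‖v‖ ^ 2 := by
  subst hy
  have hx : ∀ i ∈ T, x i ≠ 0 := fun i hi => (mem_filter.1 (hsupp.symm.subset hi)).2
  exact stmt19_general run hRIP.1.2 h0 h1 hsupp.subset hcard hK1
    (fun i hi => le_sup' (fun i => |x i|) hi)
    (sq_norm_le_of_SNR_ge h0 (one_le_sup'_abs_div_abs hTne hx) hv hSNR)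

end
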